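/- There exists a constant C > 0 such that for all s ∈ ℕ and all ε ∈ (0,1], the inverse of the star-discrepancy satisfies N(s,ε) ≤ C·s·ε^{−2}. -/

import Mathlib

open Finset

/-- Local discrepancy of the point set `x` at the corner point `t`:
`Δ(t) = #{n : x_n ∈ [0,t)}/N − ∏_j t_j`. -/
noncomputable def localDisc {N s : ℕ} (x : Fin N → Fin s → ℝ) (t : Fin s → ℝ) : ℝ :=
  ((univ.filter fun n => ∀ j, x n j < t j).card : ℝ) / N - ∏ j, t j

/-- Star-discrepancy `D*(x) = sup_{t ∈ [0,1]^s} |Δ(t)|`. -/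
noncomputable def starDisc {N s : ℕ} (x : Fin N → Fin s → ℝ) : ℝ :=
  sSup {d : ℝ | ∃ t : Fin s → ℝ, (∀ j, t j ∈ Set.Icc (0:ℝ) 1) ∧ d = |localDisc x t|}

/-- `N`-th minimal star-discrepancy `disc(N,s)`, the infimum of `D*` over all
`N`-element point sets in `[0,1)^s`. -/
noncomputable def minDisc (N s : ℕ) : ℝ :=
  sInf {d : ℝ | ∃ x : Fin N → Fin s → ℝ,
    (∀ n j, x n j ∈ Set.Ico (0:ℝ) 1) ∧ d = starDisc x}

/-- Inverse of the star-discrepancy: `N(s,ε) = min {N ≥ 1 : disc(N,s) ≤ ε}`. -/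
noncomputable def invDisc (s : ℕ) (ε : ℝ) : ℕ :=
  sInf {N : ℕ | 1 ≤ N ∧ minDisc N s ≤ ε}

open MeasureTheory ProbabilityTheory

/-!
A uniformly distributed random point set works with positive probability. A union bound over a
single fine bracketing of the boxes would lose a factor `log ε⁻¹`, so the scales are chained: for
each `k` all boxes are bracketed up to volume `2⁻ᵏ` by `exp (O(s k))` boxes with corners on a
geometric grid, and a box of the finest bracketing telescopes into differences of volume at most
`2⁻ᵏ`, one for each `k`. The small volume means a small variance, so for `N` of order `s 4ᴷ` an
exponential moment bound defeats the number of differences at level `k` while the deviations allowed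
there, proportional to `N 2⁻ᴷ (3/4)ᵏ`, still add up to `O(N 2⁻ᴷ)`.
-/

section EmpiricalProcess

variable {Ω κ : Type*} [Fintype κ]

/-- The number of points `x n` in `A` minus its mean when the points are drawn from `μ`. For `N`
points this is `N` times the local discrepancy, so no division by `N` occurs. -/
noncomputable def countDev [MeasurableSpace Ω] (μ : Measure Ω) (x : κ → Ω) (A : Set Ω) : ℝ :=
  ∑ n, (A.indicator 1 (x n) - μ.real A)

variable [MeasurableSpace Ω] {μ : Measure Ω}

@[simp]
lemma countDev_empty (x : κ → Ω) : countDev μ x ∅ = 0 := by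
  simp [countDev]

lemma measurable_countDev {A : Set Ω} (hA : MeasurableSet A) :
    Measurable fun x : κ → Ω => countDev μ x A :=
  Finset.measurable_fun_sum _ fun n _ =>
    ((measurable_one.indicator hA).comp (measurable_pi_apply n)).sub_const _

lemma countDev_sdiff [IsFiniteMeasure μ] (x : κ → Ω) {A B : Set Ω} (hB : MeasurableSet B)
    (hBA : B ⊆ A) : countDev μ x (A \ B) = countDev μ x A - countDev μ x B := by
  rw [countDev, countDev, countDev, ← Finset.sum_sub_distrib]
  refine Finset.sum_congr rfl fun n _ => ?_
  rw [Set.indicator_sdiff hBA, Pi.sub_apply, measureReal_sdiff hBA hB]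
  ring

lemma abs_countDev_le_of_subset_of_subset [IsFiniteMeasure μ] (x : κ → Ω) {L A U : Set Ω}
    (hLA : L ⊆ A) (hAU : A ⊆ U) {δ c : ℝ} (hδ : μ.real U - μ.real L ≤ δ) (hL : |countDev μ x L| ≤ c)
    (hU : |countDev μ x U| ≤ c) : |countDev μ x A| ≤ c + Fintype.card κ * δ := by
  have count_mono {A B : Set Ω} (h : A ⊆ B) :
      ∑ n, A.indicator (1 : Ω → ℝ) (x n) ≤ ∑ n, B.indicator 1 (x n) :=
    Finset.sum_le_sum fun n _ => Set.indicator_le_indicator_of_subset h (fun _ => zero_le_one) _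
  have hμA : Fintype.card κ * (μ.real A - μ.real L) ≤ Fintype.card κ * δ := by
    gcongr; linarith [measureReal_mono (μ := μ) hAU]
  have hμU : Fintype.card κ * (μ.real U - μ.real A) ≤ Fintype.card κ * δ := by
    gcongr; linarith [measureReal_mono (μ := μ) hLA]
  simp only [countDev, Finset.sum_sub_distrib, Finset.sum_const, Finset.card_univ, nsmul_eq_mul,
    abs_le] at hL hU ⊢
  constructor <;> linarith [count_mono hLA, count_mono hAU]

variable [IsProbabilityMeasure μ]

@[simp]
lemma countDev_univ (x : κ → Ω) : countDev μ x Set.univ = 0 := by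
  simp [countDev]

lemma mgf_indicator_sub_le {A : Set Ω} (hA : MeasurableSet A) {a : ℝ} (ha : |a| ≤ 1) :
    mgf (fun ω => A.indicator 1 ω - μ.real A) μ a ≤ Real.exp (a ^ 2 * μ.real A) := by
  set p := μ.real A
  have exp_indicator (ω : Ω) :
      Real.exp (a * A.indicator 1 ω) = 1 + A.indicator (fun _ => Real.exp a - 1) ω := by
    by_cases hω : ω ∈ A <;> simp [hω]
  have mgf_indicator : mgf (A.indicator 1) μ a = 1 + p * (Real.exp a - 1) := by
    simp only [mgf, exp_indicator]
    rw [integral_add (integrable_const _) ((integrable_const _).indicator hA),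
      integral_indicator_const _ hA]
    simp [p]
  have exp_le : Real.exp a - 1 - a ≤ a ^ 2 := (abs_le.1 (Real.abs_exp_sub_one_sub_id_le ha)).2
  calc mgf (fun ω => A.indicator 1 ω - p) μ a
      = (1 + p * (Real.exp a - 1)) * Real.exp (a * -p) := by
        simp only [sub_eq_add_neg _ p, mgf_add_const, mgf_indicator]
    _ ≤ Real.exp (p * (Real.exp a - 1)) * Real.exp (a * -p) := by
        gcongr; linarith [Real.add_one_le_exp (p * (Real.exp a - 1))]
    _ = Real.exp ((Real.exp a - 1 - a) * p) := by rw [← Real.exp_add]; ring_nf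
    _ ≤ Real.exp (a ^ 2 * p) := by gcongr

lemma integrable_exp_mul_countDev {A : Set Ω} (hA : MeasurableSet A) (a : ℝ) :
    Integrable (fun x : κ → Ω => Real.exp (a * countDev μ x A)) (Measure.pi fun _ => μ) := by
  refine integrable_exp_mul_of_mem_Icc (a := -Fintype.card κ) (b := Fintype.card κ)
    (measurable_countDev hA).aemeasurable (.of_forall fun x => ?_)
  have h0 : 0 ≤ μ.real A := measureReal_nonneg
  have h1 : μ.real A ≤ 1 := measureReal_le_one
  have term_le (n : κ) : |A.indicator 1 (x n) - μ.real A| ≤ 1 := by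
    by_cases hx : x n ∈ A <;> simp only [hx, Set.indicator_of_mem, Set.indicator_of_notMem,
      not_false_eq_true, Pi.one_apply, abs_le] <;> constructor <;> linarith
  rw [Set.mem_Icc, ← abs_le]
  calc |countDev μ x A| ≤ ∑ n, |A.indicator 1 (x n) - μ.real A| := Finset.abs_sum_le_sum_abs _ _
    _ ≤ ∑ _n : κ, 1 := Finset.sum_le_sum fun n _ => term_le n
    _ = Fintype.card κ := by simp

lemma mgf_countDev_le {A : Set Ω} (hA : MeasurableSet A) {a : ℝ} (ha : |a| ≤ 1) :
    mgf (fun x : κ → Ω => countDev μ x A) (Measure.pi fun _ => μ) a ≤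
      Real.exp (Fintype.card κ * (a ^ 2 * μ.real A)) := by
  calc mgf (fun x : κ → Ω => countDev μ x A) (Measure.pi fun _ => μ) a
      = mgf (fun ω => A.indicator 1 ω - μ.real A) μ a ^ Fintype.card κ := by
        simp only [mgf, countDev, Finset.mul_sum, Real.exp_sum]
        exact integral_fintype_prod_eq_pow fun ω => Real.exp (a * (A.indicator 1 ω - μ.real A))
    _ ≤ Real.exp (a ^ 2 * μ.real A) ^ Fintype.card κ :=
        pow_le_pow_left₀ mgf_nonneg (mgf_indicator_sub_le hA ha) _
    _ = _ := (Real.exp_nat_mul _ _).symm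

lemma measureReal_le_abs_countDev {A : Set Ω} (hA : MeasurableSet A) {a : ℝ} (ha : a ∈ Set.Icc 0 1)
    (c : ℝ) :
    (Measure.pi fun _ : κ => μ).real {x | c ≤ |countDev μ x A|} ≤
      2 * Real.exp (Fintype.card κ * (a ^ 2 * μ.real A) - a * c) := by
  set P : Measure (κ → Ω) := Measure.pi fun _ => μ
  have habs : |a| ≤ 1 := by rw [abs_of_nonneg ha.1]; exact ha.2
  have upper : P.real {x | c ≤ countDev μ x A} ≤
      Real.exp (Fintype.card κ * (a ^ 2 * μ.real A) - a * c) := calc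
    _ ≤ Real.exp (-a * c) * mgf (fun x => countDev μ x A) P a :=
      measure_ge_le_exp_mul_mgf c ha.1 (integrable_exp_mul_countDev hA a)
    _ ≤ Real.exp (-a * c) * Real.exp (Fintype.card κ * (a ^ 2 * μ.real A)) := by
      gcongr; exact mgf_countDev_le hA habs
    _ = _ := by rw [← Real.exp_add]; ring_nf
  have lower : P.real {x | countDev μ x A ≤ -c} ≤
      Real.exp (Fintype.card κ * (a ^ 2 * μ.real A) - a * c) := calc
    _ ≤ Real.exp (- -a * -c) * mgf (fun x => countDev μ x A) P (-a) :=
      measure_le_le_exp_mul_mgf (-c) (by linarith [ha.1]) (integrable_exp_mul_countDev hA (-a))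
    _ ≤ Real.exp (- -a * -c) * Real.exp (Fintype.card κ * ((-a) ^ 2 * μ.real A)) := by
      gcongr; exact mgf_countDev_le hA (by rwa [abs_neg])
    _ = _ := by rw [← Real.exp_add]; ring_nf
  have split : {x : κ → Ω | c ≤ |countDev μ x A|} =
      {x | c ≤ countDev μ x A} ∪ {x | countDev μ x A ≤ -c} := by
    ext x; simp [le_abs, le_neg]
  rw [split, two_mul]
  exact (measureReal_union_le _ _).trans (add_le_add upper lower)

end EmpiricalProcess

lemma exists_forall_notMem_of_sum_measureReal_lt_one {X ι : Type*} [MeasurableSpace X]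
    {P : Measure X} [IsProbabilityMeasure P] {T : Finset ι} {S : ι → Set X}
    (h : ∑ i ∈ T, P.real (S i) < 1) : ∃ x, ∀ i ∈ T, x ∉ S i := by
  by_contra! hcover
  have union_eq : ⋃ i ∈ T, S i = Set.univ := Set.eq_univ_of_forall fun x => by simpa using hcover x
  have := measureReal_biUnion_finset_le (μ := P) T S
  rw [union_eq, probReal_univ] at this
  exact this.not_gt h

section Chaining

variable {Ω : Type*} [MeasurableSpace Ω]

/-- `Γ` is a `δ`-bracketing of the class `𝒜` by members of `𝒜`: every set of `𝒜` lies between two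
sets of `Γ` whose measures differ by at most `δ`. -/
structure IsBracketing (μ : Measure Ω) (𝒜 : Set (Set Ω)) (Γ : Finset (Set Ω)) (δ : ℝ) : Prop where
  subset : (Γ : Set (Set Ω)) ⊆ 𝒜
  exists_between : ∀ A ∈ 𝒜, ∃ L ∈ Γ, ∃ U ∈ Γ, L ⊆ A ∧ A ⊆ U ∧ μ.real U - μ.real L ≤ δ

variable {μ : Measure Ω}

lemma IsBracketing.exists_measureReal_sdiff_le [IsFiniteMeasure μ] {𝒜 : Set (Set Ω)}
    {Γ : Finset (Set Ω)} {δ : ℝ} (hΓ : IsBracketing μ 𝒜 Γ δ) (h𝒜 : ∀ A ∈ 𝒜, MeasurableSet A)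
    {A : Set Ω} (hA : A ∈ 𝒜) : ∃ L ∈ Γ, L ⊆ A ∧ μ.real (A \ L) ≤ δ := by
  obtain ⟨L, hL, U, -, hLA, hAU, hδ⟩ := hΓ.exists_between A hA
  refine ⟨L, hL, hLA, ?_⟩
  rw [measureReal_sdiff hLA (h𝒜 L (hΓ.subset hL))]
  linarith [measureReal_mono (μ := μ) hAU]

variable [IsProbabilityMeasure μ]

open Classical in
lemma isBracketing_pair_empty_univ {𝒜 : Set (Set Ω)} (h_empty : ∅ ∈ 𝒜) (h_univ : Set.univ ∈ 𝒜) :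
    IsBracketing μ 𝒜 {∅, Set.univ} 1 where
  subset := by simp [Set.insert_subset_iff, h_empty, h_univ]
  exists_between A _ := ⟨∅, by simp, Set.univ, by simp, A.empty_subset, A.subset_univ, by simp⟩

lemma abs_le_sum_of_chain {α : Type*} {Γ : ℕ → Set α} {f : α → ℝ} {c : ℕ → ℝ}
    (h_zero : ∀ a ∈ Γ 0, f a = 0) {K : ℕ}
    (h_link : ∀ k < K, ∀ a ∈ Γ (k + 1), ∃ b ∈ Γ k, |f a - f b| ≤ c k) {a : α} (ha : a ∈ Γ K) :
    |f a| ≤ ∑ k ∈ range K, c k := by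
  induction K generalizing a with
  | zero => simp [h_zero a ha]
  | succ K ih =>
    obtain ⟨b, hb, hab⟩ := h_link K K.lt_succ_self a ha
    calc |f a| = |f b + (f a - f b)| := by rw [add_sub_cancel]
      _ ≤ |f b| + |f a - f b| := abs_add_le _ _
      _ ≤ ∑ k ∈ range (K + 1), c k := by
        rw [sum_range_succ]
        gcongr
        exact ih (fun k hk => h_link k (hk.trans K.lt_succ_self)) hb

/-- The deviation allowed at the `k`-th link of the chain for `N` points and final scale `2⁻ᴷ`.
The ratio `3 / 4` makes these thresholds summable and is still larger than the decay `2 ^ (-k / 2)`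
of the standard deviations, so that the failure probabilities decay doubly exponentially. -/
noncomputable def linkThreshold (N K k : ℕ) : ℝ :=
  N / 2 ^ K * ((3 / 4) ^ k / 4)

lemma sum_linkThreshold_le (N K : ℕ) : ∑ k ∈ range K, linkThreshold N K k ≤ N / 2 ^ K := by
  have geom : ∑ k ∈ range K, (3 / 4 : ℝ) ^ k ≤ 4 := by
    rw [geom_sum_eq (by norm_num), div_le_iff_of_neg (by norm_num)]
    linarith [show (0 : ℝ) ≤ (3 / 4) ^ K by positivity]
  calc ∑ k ∈ range K, linkThreshold N K k = N / 2 ^ K * ((∑ k ∈ range K, (3 / 4) ^ k) / 4) := by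
        simp only [linkThreshold, Finset.mul_sum, Finset.sum_div]
    _ ≤ N / 2 ^ K * (4 / 4) := by gcongr
    _ = N / 2 ^ K := by norm_num

lemma measureReal_linkThreshold_le_abs_countDev {N K k : ℕ} (hk : k ≤ K) {h : ℝ}
    (hN : 512 * h * 4 ^ K ≤ N) {B : Set Ω} (hB : MeasurableSet B) (hμB : μ.real B ≤ (1 / 2) ^ k) :
    (Measure.pi fun _ : Fin N => μ).real {x | linkThreshold N K k ≤ |countDev μ x B|} ≤
      2 * Real.exp (-(h * (k + 1))) := by
  -- The minimiser of `N a² 2⁻ᵏ - a * linkThreshold N K k`.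
  set a : ℝ := (3 / 2) ^ k / (8 * 2 ^ K) with ha_def
  have ha : a ∈ Set.Icc 0 1 := by
    refine ⟨by positivity, (div_le_one (by positivity)).2 ?_⟩
    calc (3 / 2 : ℝ) ^ k ≤ 2 ^ k := by gcongr; norm_num
      _ ≤ 2 ^ K := by gcongr; norm_num
      _ ≤ 8 * 2 ^ K := by linarith [show (0 : ℝ) < 2 ^ K by positivity]
  have variance_term : a ^ 2 * (1 / 2) ^ k = (9 / 8) ^ k / (64 * 4 ^ K) := by
    rw [ha_def, div_pow, mul_pow, ← pow_mul, ← pow_mul, mul_comm k, mul_comm K, pow_mul, pow_mul,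
      div_mul_eq_mul_div, ← mul_pow]
    norm_num
  have threshold_term : a * linkThreshold N K k = N * (2 * ((9 / 8) ^ k / (64 * 4 ^ K))) := by
    have nine_eighths_pow : (9 / 8 : ℝ) ^ k = (3 / 2) ^ k * (3 / 4) ^ k := by
      rw [← mul_pow]; norm_num
    have four_pow : (4 : ℝ) ^ K = 2 ^ K * 2 ^ K := by rw [← mul_pow]; norm_num
    rw [ha_def, linkThreshold, nine_eighths_pow, four_pow]
    field_simp
    ring
  have bernoulli : ((k : ℝ) + 1) / 8 ≤ (9 / 8) ^ k := by
    calc ((k : ℝ) + 1) / 8 ≤ 1 + k * (1 / 8) := by linarith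
      _ ≤ (1 + 1 / 8) ^ k := one_add_mul_le_pow (by norm_num) k
      _ = (9 / 8) ^ k := by norm_num
  have h_le : h * (k + 1) ≤ N * ((9 / 8) ^ k / (64 * 4 ^ K)) := calc
    h * (k + 1) = 512 * h * 4 ^ K * ((k + 1) / 8 / (64 * 4 ^ K)) := by field_simp; ring
    _ ≤ N * ((9 / 8) ^ k / (64 * 4 ^ K)) := by gcongr
  refine (measureReal_le_abs_countDev hB ha _).trans ?_
  gcongr
  calc (Fintype.card (Fin N) : ℝ) * (a ^ 2 * μ.real B) - a * linkThreshold N K k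
      ≤ (N : ℝ) * (a ^ 2 * (1 / 2) ^ k) - a * linkThreshold N K k := by
        rw [Fintype.card_fin]; gcongr
    _ = -((N : ℝ) * ((9 / 8) ^ k / (64 * 4 ^ K))) := by rw [variance_term, threshold_term]; ring
    _ ≤ -(h * (k + 1)) := by gcongr

lemma exists_forall_abs_countDev_lt_linkThreshold {N K : ℕ} {h : ℝ} (hN : 512 * h * 4 ^ K ≤ N)
    {D : ℕ → Finset (Set Ω)} (hD : ∀ k, ∀ B ∈ D k, MeasurableSet B ∧ μ.real B ≤ (1 / 2) ^ k)
    (hcard : ∀ k : ℕ, 2 ^ (k + 2) * (#(D k) : ℝ) ≤ Real.exp (h * (k + 1))) :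
    ∃ x : Fin N → Ω, ∀ k < K, ∀ B ∈ D k, |countDev μ x B| < linkThreshold N K k := by
  set P : Measure (Fin N → Ω) := Measure.pi fun _ => μ
  let bad (i : Σ _ : ℕ, Set Ω) : Set (Fin N → Ω) :=
    {x | linkThreshold N K i.1 ≤ |countDev μ x i.2|}
  have level_le {k : ℕ} (hk : k < K) : ∑ B ∈ D k, P.real (bad ⟨k, B⟩) ≤ (1 / 2) ^ (k + 1) := calc
    _ ≤ ∑ _B ∈ D k, 2 * Real.exp (-(h * (k + 1))) := Finset.sum_le_sum fun B hB =>
      measureReal_linkThreshold_le_abs_countDev hk.le hN (hD k B hB).1 (hD k B hB).2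
    _ = 2 ^ (k + 2) * #(D k) / Real.exp (h * (k + 1)) * (1 / 2) ^ (k + 1) := by
      rw [sum_const, nsmul_eq_mul, Real.exp_neg, one_div, inv_pow]
      field_simp
      ring
    _ ≤ 1 * (1 / 2) ^ (k + 1) := by
      gcongr
      exact (div_le_one (Real.exp_pos _)).2 (hcard k)
    _ = (1 / 2) ^ (k + 1) := one_mul _
  have total_lt : ∑ i ∈ (range K).sigma D, P.real (bad i) < 1 := calc
    _ = ∑ k ∈ range K, ∑ B ∈ D k, P.real (bad ⟨k, B⟩) := sum_sigma _ _ _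
    _ ≤ ∑ k ∈ range K, (1 / 2 : ℝ) ^ (k + 1) :=
      Finset.sum_le_sum fun k hk => level_le (mem_range.1 hk)
    _ = 1 - (1 / 2) ^ K := by
      simp only [pow_succ, ← Finset.sum_mul]
      rw [geom_sum_eq (by norm_num)]
      ring
    _ < 1 := sub_lt_self _ (by positivity)
  obtain ⟨x, hx⟩ := exists_forall_notMem_of_sum_measureReal_lt_one total_lt
  exact ⟨x, fun k hk B hB => not_le.1 (hx ⟨k, B⟩ (mem_sigma.2 ⟨mem_range.2 hk, hB⟩))⟩

theorem exists_forall_abs_countDev_le {N K : ℕ} {h : ℝ} (hN : 512 * h * 4 ^ K ≤ N)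
    {𝒜 : Set (Set Ω)} (h𝒜 : ∀ A ∈ 𝒜, MeasurableSet A) {Γ : ℕ → Finset (Set Ω)}
    (hΓ : ∀ k, IsBracketing μ 𝒜 (Γ k) ((1 / 2) ^ k)) (hΓ_zero : ∀ A ∈ Γ 0, A = ∅ ∨ A = Set.univ)
    (hcard : ∀ k : ℕ, 2 ^ (k + 2) * (#(Γ (k + 1)) : ℝ) ≤ Real.exp (h * (k + 1))) :
    ∃ x : Fin N → Ω, ∀ A ∈ 𝒜, |countDev μ x A| ≤ 2 * (N / 2 ^ K) := by
  classical
  have exists_pred (k : ℕ) : ∀ A ∈ Γ (k + 1), ∃ L ∈ Γ k, L ⊆ A ∧ μ.real (A \ L) ≤ (1 / 2) ^ k :=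
    fun A hA => (hΓ k).exists_measureReal_sdiff_le h𝒜 ((hΓ (k + 1)).subset hA)
  choose! pred pred_mem pred_subset pred_measure using exists_pred
  have measurable_mem {k : ℕ} {A : Set Ω} (hA : A ∈ Γ k) : MeasurableSet A :=
    h𝒜 A ((hΓ k).subset hA)
  obtain ⟨x, hx⟩ := exists_forall_abs_countDev_lt_linkThreshold (μ := μ) hN
    (D := fun k => (Γ (k + 1)).image fun A : Set Ω => A \ pred k A)
    (fun k => forall_mem_image.2 fun A hA =>
      ⟨(measurable_mem hA).diff (measurable_mem (pred_mem k A hA)), pred_measure k A hA⟩)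
    (fun k => (hcard k).trans' <|
      mul_le_mul_of_nonneg_left (mod_cast card_image_le) (by positivity))
  have link (k : ℕ) (hk : k < K) (A : Set Ω) (hA : A ∈ Γ (k + 1)) :
      ∃ L ∈ Γ k, |countDev μ x A - countDev μ x L| ≤ linkThreshold N K k := by
    refine ⟨pred k A, pred_mem k A hA, ?_⟩
    rw [← countDev_sdiff x (measurable_mem (pred_mem k A hA)) (pred_subset k A hA)]
    exact (hx k hk _ (mem_image_of_mem _ hA)).le
  have bound_mem {A : Set Ω} (hA : A ∈ Γ K) : |countDev μ x A| ≤ N / 2 ^ K := by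
    refine (abs_le_sum_of_chain (Γ := fun k => (Γ k : Set (Set Ω))) (fun B hB => ?_) link
      hA).trans (sum_linkThreshold_le N K)
    rcases hΓ_zero B hB with rfl | rfl <;> simp
  refine ⟨x, fun A hA => ?_⟩
  obtain ⟨L, hL, U, hU, hLA, hAU, hδ⟩ := (hΓ K).exists_between A hA
  calc |countDev μ x A| ≤ N / 2 ^ K + Fintype.card (Fin N) * (1 / 2) ^ K :=
        abs_countDev_le_of_subset_of_subset x hLA hAU hδ (bound_mem hL) (bound_mem hU)
    _ = 2 * (N / 2 ^ K) := by rw [Fintype.card_fin, one_div, inv_pow]; ring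

end Chaining

lemma exists_le_sum_eq {ι : Type*} [Fintype ι] {n : ι → ℕ} {M : ℕ} (hM : M ≤ ∑ j, n j) :
    ∃ m ≤ n, ∑ j, m j = M := by
  classical
  induction M with
  | zero => exact ⟨0, fun _ => Nat.zero_le _, by simp⟩
  | succ M ih =>
    obtain ⟨m, hmn, hm⟩ := ih (M.le_succ.trans hM)
    obtain ⟨j, -, hj⟩ : ∃ j ∈ univ, m j < n j := exists_lt_of_sum_lt (by omega)
    refine ⟨m + Pi.single j 1, fun i => ?_, by simp [sum_add_distrib, hm]⟩
    rcases eq_or_ne i j with rfl | hij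
    · simpa using hj
    · simpa [hij] using hmn i

section MultiIndex

variable (ι : Type*) [Fintype ι]

open Classical in
/-- The multi-indices `m : ι → ℕ` with `∑ j, m j ≤ R`. The value at `none` is the slack
`R - ∑ j, m j`. -/
noncomputable def multiIndexLE (R : ℕ) : Finset (ι → ℕ) :=
  (finsuppAntidiag (univ : Finset (Option ι)) R).image fun m j => m (some j)

variable {ι}

lemma mem_multiIndexLE {R : ℕ} {m : ι → ℕ} : m ∈ multiIndexLE ι R ↔ ∑ j, m j ≤ R := by
  simp only [multiIndexLE, mem_image, mem_finsuppAntidiag, Fintype.sum_option, subset_univ,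
    and_true]
  constructor
  · rintro ⟨m, rfl, rfl⟩
    exact Nat.le_add_left _ _
  · intro hm
    refine ⟨Finsupp.equivFunOnFinite.symm fun o => o.elim (R - ∑ j, m j) m, ?_, ?_⟩
    · simpa using Nat.sub_add_cancel hm
    · simp

lemma card_multiIndexLE_le (R : ℕ) :
    #(multiIndexLE ι R) ≤ (R + Fintype.card ι).choose (Fintype.card ι) := by
  classical
  refine card_image_le.trans_eq ?_
  rw [card_finsuppAntidiag_nat_eq_choose, card_univ, Fintype.card_option, add_right_comm,
    Nat.add_sub_cancel, add_comm, Nat.choose_symm_add]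

lemma card_multiIndexLE_card_mul_le (b : ℕ) :
    (#(multiIndexLE ι (Fintype.card ι * b)) : ℝ) ≤ (Real.exp 1 * (b + 1)) ^ Fintype.card ι := by
  set s := Fintype.card ι
  calc (#(multiIndexLE ι (s * b)) : ℝ) ≤ (s * b + s).choose s := mod_cast card_multiIndexLE_le _
    _ ≤ ((s * b + s : ℕ) : ℝ) ^ s / s.factorial := Nat.choose_le_pow_div s _
    _ = (s ^ s / s.factorial) * (b + 1) ^ s := by
      rw [div_mul_eq_mul_div, ← mul_pow]; push_cast; ring_nf
    _ ≤ Real.exp s * (b + 1) ^ s := by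
      gcongr; exact Real.pow_div_factorial_le_exp _ s.cast_nonneg s
    _ = (Real.exp 1 * (b + 1)) ^ s := by rw [mul_pow, Real.exp_one_pow]

end MultiIndex

section Boxes

attribute [local instance] Measure.Subtype.measureSpace

variable {ι : Type*}

/-- The half-open box `[0,t)` in `[0,1)^ι`. The cube is encoded as a function type into the subtype
`[0,1)`, so that `volume` is its uniform distribution. -/
def anchoredBox (t : ι → ℝ) : Set (ι → Set.Ico (0 : ℝ) 1) :=
  Set.univ.pi fun j => {y | (y : ℝ) < t j}

lemma mem_anchoredBox {t : ι → ℝ} {x : ι → Set.Ico (0 : ℝ) 1} :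
    x ∈ anchoredBox t ↔ ∀ j, (x j : ℝ) < t j := by
  simp [anchoredBox]

lemma anchoredBox_mono : Monotone (anchoredBox (ι := ι)) :=
  fun _ _ htu => Set.pi_mono fun j _ _ hy => lt_of_lt_of_le hy (htu j)

lemma anchoredBox_zero [Nonempty ι] : anchoredBox (0 : ι → ℝ) = ∅ := by
  refine Set.eq_empty_of_forall_notMem fun x hx => ?_
  obtain ⟨j⟩ := ‹Nonempty ι›
  exact (mem_anchoredBox.1 hx j).not_ge (x j).2.1

lemma anchoredBox_one : anchoredBox (1 : ι → ℝ) = Set.univ :=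
  Set.eq_univ_of_forall fun x => mem_anchoredBox.2 fun j => (x j).2.2

lemma measurableSet_anchoredBox [Countable ι] (t : ι → ℝ) : MeasurableSet (anchoredBox t) :=
  MeasurableSet.univ_pi fun _ => measurableSet_lt measurable_subtype_coe measurable_const

lemma volume_setOf_coe_lt {t : ℝ} (ht : t ≤ 1) :
    volume {y : Set.Ico (0 : ℝ) 1 | (y : ℝ) < t} = ENNReal.ofReal t := by
  have image_eq : Subtype.val '' {y : Set.Ico (0 : ℝ) 1 | (y : ℝ) < t} = Set.Ico 0 t := by
    ext y
    simp only [Set.mem_image, Set.mem_ofPred_eq, Subtype.exists, Set.mem_Ico]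
    constructor
    · rintro ⟨y, hy, hyt, rfl⟩
      exact ⟨hy.1, hyt⟩
    · rintro ⟨hy, hyt⟩
      exact ⟨y, ⟨hy, hyt.trans_le ht⟩, hyt, rfl⟩
  rw [← volume_image_subtype_coe measurableSet_Ico, image_eq, Real.volume_Ico, sub_zero]

instance : IsProbabilityMeasure (volume : Measure (Set.Ico (0 : ℝ) 1)) where
  measure_univ := by
    rw [← ENNReal.ofReal_one, ← volume_setOf_coe_lt le_rfl]
    congr
    exact (Set.eq_univ_of_forall fun y => y.2.2).symm

variable [Fintype ι]

lemma volume_real_anchoredBox {t : ι → ℝ} (ht : t ∈ Set.Icc 0 1) :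
    volume.real (anchoredBox t) = ∏ j, t j := by
  rw [measureReal_def, anchoredBox, volume_pi_pi, ENNReal.toReal_prod]
  refine prod_congr rfl fun j _ => ?_
  rw [volume_setOf_coe_lt (ht.2 j), ENNReal.toReal_ofReal (ht.1 j)]

lemma exists_pow_bracket {r t : ℝ} (ht : t ≤ 1) (M : ℕ) :
    ∃ n, t ≤ r ^ n ∧ (n < M → r ^ (n + 1) ≤ t) := by
  classical
  refine ⟨Nat.findGreatest (fun n => t ≤ r ^ n) M, ?_, fun hn => ?_⟩
  · exact Nat.findGreatest_spec (P := fun n => t ≤ r ^ n) M.zero_le (by simpa using ht)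
  · exact le_of_not_ge <|
      Nat.findGreatest_is_greatest (P := fun n => t ≤ r ^ n) (Nat.lt_succ_self _) hn

open Classical in
/-- The empty box together with the anchored boxes whose corners lie on the geometric grid
`{1, r, r ^ 2, …}` and have volume at least `r ^ R`. -/
noncomputable def geometricBoxes (ι : Type*) [Fintype ι] (r : ℝ) (R : ℕ) :
    Finset (Set (ι → Set.Ico (0 : ℝ) 1)) :=
  insert ∅ ((multiIndexLE ι R).image fun m => anchoredBox fun j => r ^ m j)

lemma empty_mem_geometricBoxes (r : ℝ) (R : ℕ) : ∅ ∈ geometricBoxes ι r R :=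
  mem_insert_self _ _

lemma anchoredBox_pow_mem_geometricBoxes (r : ℝ) {R : ℕ} {m : ι → ℕ} (hm : ∑ j, m j ≤ R) :
    (anchoredBox fun j => r ^ m j) ∈ geometricBoxes ι r R :=
  mem_insert_of_mem (mem_image_of_mem _ (mem_multiIndexLE.2 hm))

lemma card_geometricBoxes_card_mul_le [Nonempty ι] (r : ℝ) (b : ℕ) :
    (#(geometricBoxes ι r (Fintype.card ι * b)) : ℝ) ≤
      (Real.exp 1 * (b + 1) + 1) ^ Fintype.card ι := calc
  (#(geometricBoxes ι r (Fintype.card ι * b)) : ℝ)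
      ≤ #(multiIndexLE ι (Fintype.card ι * b)) + 1 :=
    mod_cast (card_insert_le _ _).trans (Nat.succ_le_succ card_image_le)
  _ ≤ (Real.exp 1 * (b + 1)) ^ Fintype.card ι + 1 ^ Fintype.card ι := by
    rw [one_pow]; gcongr; exact card_multiIndexLE_card_mul_le b
  _ ≤ (Real.exp 1 * (b + 1) + 1) ^ Fintype.card ι :=
    pow_add_pow_le (by positivity) zero_le_one Fintype.card_ne_zero

lemma volume_real_anchoredBox_pow {r : ℝ} (hr : r ∈ Set.Icc 0 1) (m : ι → ℕ) :
    volume.real (anchoredBox fun j => r ^ m j) = r ^ ∑ j, m j := by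
  rw [volume_real_anchoredBox ⟨fun j => pow_nonneg hr.1 _, fun j => pow_le_one₀ hr.1 hr.2⟩,
    prod_pow_eq_pow_sum]

theorem isBracketing_geometricBoxes [Nonempty ι] {r δ : ℝ} (hr : r ∈ Set.Icc 0 1) {M : ℕ}
    (hM : r ^ M ≤ δ) (hδ : 1 - r ^ Fintype.card ι ≤ δ) :
    IsBracketing volume (anchoredBox '' Set.Icc (0 : ι → ℝ) 1)
      (geometricBoxes ι r (M + Fintype.card ι)) δ where
  subset A hA := by
    rcases mem_insert.1 hA with rfl | hA
    · exact ⟨0, ⟨le_rfl, zero_le_one⟩, anchoredBox_zero⟩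
    · obtain ⟨m, -, rfl⟩ := mem_image.1 hA
      exact ⟨_, ⟨fun j => pow_nonneg hr.1 _, fun j => pow_le_one₀ hr.1 hr.2⟩, rfl⟩
  exists_between := by
    rintro _ ⟨t, ht, rfl⟩
    choose n le_pow pow_succ_le using fun j => exists_pow_bracket (r := r) (ht.2 j) M
    rcases lt_or_ge (∑ j, n j) M with hn | hn
    · have sum_succ : ∑ j, (n j + 1) = ∑ j, n j + Fintype.card ι := by
        simp [sum_add_distrib]
      have n_lt (j : ι) : n j < M := (single_le_sum_of_canonicallyOrdered (mem_univ j)).trans_lt hn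
      refine ⟨_, anchoredBox_pow_mem_geometricBoxes r (m := fun j => n j + 1) (by omega),
        _, anchoredBox_pow_mem_geometricBoxes r (m := n) (by omega),
        anchoredBox_mono fun j => pow_succ_le j (n_lt j), anchoredBox_mono le_pow, ?_⟩
      rw [volume_real_anchoredBox_pow hr, volume_real_anchoredBox_pow hr, sum_succ]
      calc r ^ ∑ j, n j - r ^ (∑ j, n j + Fintype.card ι)
          = (r ^ ∑ j, n j) * (1 - r ^ Fintype.card ι) := by ring
        _ ≤ 1 * (1 - r ^ Fintype.card ι) := by
          gcongr
          · exact sub_nonneg.2 (pow_le_one₀ hr.1 hr.2)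
          · exact pow_le_one₀ hr.1 hr.2
        _ ≤ δ := by rwa [one_mul]
    -- A box of volume at most `r ^ M` fits into a grid box of volume exactly `r ^ M`.
    · obtain ⟨m, hmn, hm⟩ := exists_le_sum_eq hn
      refine ⟨∅, empty_mem_geometricBoxes _ _,
        _, anchoredBox_pow_mem_geometricBoxes r (m := m) (by omega), Set.empty_subset _,
        anchoredBox_mono fun j =>
          (le_pow j).trans (pow_le_pow_of_le_one hr.1 hr.2 (hmn j)), ?_⟩
      rwa [volume_real_anchoredBox_pow hr, hm, measureReal_empty, sub_zero]

theorem exists_isBracketing_anchoredBox (ι : Type*) [Fintype ι] [Nonempty ι] {δ : ℝ}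
    (hδ : δ ∈ Set.Ioc 0 1) :
    ∃ Γ, IsBracketing volume (anchoredBox '' Set.Icc (0 : ι → ℝ) 1) Γ δ ∧
      (#Γ : ℝ) ≤ (12 * δ⁻¹ ^ 2) ^ Fintype.card ι := by
  obtain ⟨hδ_pos, hδ_le⟩ := hδ
  set s := Fintype.card ι
  have hs : 0 < s := Fintype.card_pos
  set q := ⌈δ⁻¹ ^ 2⌉₊
  -- With this ratio, `r ^ s = exp (-δ) ≥ 1 - δ`, and `s δ⁻²` steps bring the volume below
  -- `exp (-δ⁻¹) ≤ δ`.
  set r := Real.exp (-(δ / s))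
  have hr : r ∈ Set.Icc 0 1 :=
    ⟨Real.exp_nonneg _, Real.exp_le_one_iff.2 (neg_nonpos.2 (by positivity))⟩
  have pow_card : r ^ s = Real.exp (-δ) := by
    rw [← Real.exp_nat_mul]; congr 1; field_simp
  have pow_card_mul : r ^ (s * q) ≤ δ := calc
    r ^ (s * q) = Real.exp (-(q * δ)) := by
      rw [pow_mul, pow_card, ← Real.exp_nat_mul, mul_neg]
    _ ≤ Real.exp (-(δ⁻¹ ^ 2 * δ)) := by gcongr; exact Nat.le_ceil _
    _ = (Real.exp δ⁻¹)⁻¹ := by rw [Real.exp_neg]; congr 2; field_simp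
    _ ≤ δ := inv_le_of_inv_le₀ hδ_pos (by linarith [Real.add_one_le_exp δ⁻¹])
  refine ⟨geometricBoxes ι r (s * q + s), isBracketing_geometricBoxes hr pow_card_mul ?_, ?_⟩
  · rw [pow_card]
    linarith [Real.add_one_le_exp (-δ)]
  · calc (#(geometricBoxes ι r (s * q + s)) : ℝ) ≤ (Real.exp 1 * ((q + 1 : ℕ) + 1) + 1) ^ s :=
          card_geometricBoxes_card_mul_le r (q + 1)
      _ ≤ (12 * δ⁻¹ ^ 2) ^ s := by
        have one_le : 1 ≤ δ⁻¹ ^ 2 := one_le_pow₀ ((one_le_inv₀ hδ_pos).2 hδ_le)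
        have q_lt : (q : ℝ) < δ⁻¹ ^ 2 + 1 := Nat.ceil_lt_add_one (by positivity)
        gcongr
        push_cast
        nlinarith [Real.exp_one_lt_d9, Real.exp_one_gt_d9]

lemma two_pow_mul_bracketing_card_le_exp {s : ℕ} (hs : s ≠ 0) (k : ℕ) :
    2 ^ (k + 2) * (12 * ((1 / 2 : ℝ) ^ (k + 1))⁻¹ ^ 2) ^ s ≤ Real.exp (6 * s * (k + 1)) := by
  have le_exp_six : (192 : ℝ) ≤ Real.exp 6 := by
    calc (192 : ℝ) ≤ 2.7 ^ 6 := by norm_num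
      _ ≤ Real.exp 1 ^ 6 := by gcongr; linarith [Real.exp_one_gt_d9]
      _ = Real.exp 6 := by rw [← Real.exp_nat_mul]; norm_num
  calc 2 ^ (k + 2) * (12 * ((1 / 2 : ℝ) ^ (k + 1))⁻¹ ^ 2) ^ s
      ≤ (2 ^ (k + 2)) ^ s * (12 * ((1 / 2 : ℝ) ^ (k + 1))⁻¹ ^ 2) ^ s := by
        gcongr; exact le_self_pow₀ (one_le_pow₀ one_le_two) hs
    _ = (24 * 8 ^ (k + 1)) ^ s := by
      have eight_pow : (8 : ℝ) ^ (k + 1) = 2 ^ (k + 1) * (2 ^ (k + 1)) ^ 2 := by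
        rw [← pow_mul, mul_comm _ 2, pow_mul, ← mul_pow]; norm_num
      rw [← mul_pow, eight_pow, ← inv_pow, one_div, inv_inv]
      ring
    _ ≤ (24 ^ (k + 1) * 8 ^ (k + 1)) ^ s := by
      gcongr; exact le_self_pow₀ (by norm_num) k.succ_ne_zero
    _ ≤ (Real.exp 6 ^ (k + 1)) ^ s := by
      rw [← mul_pow]; gcongr; linarith
    _ = Real.exp (6 * s * (k + 1)) := by
      rw [← pow_mul, ← Real.exp_nat_mul]; push_cast; ring_nf

theorem exists_forall_abs_countDev_anchoredBox_le (ι : Type*) [Fintype ι] [Nonempty ι] {N K : ℕ}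
    (hN : 3072 * Fintype.card ι * 4 ^ K ≤ N) :
    ∃ x : Fin N → ι → Set.Ico (0 : ℝ) 1, ∀ t ∈ Set.Icc (0 : ι → ℝ) 1,
      |countDev volume x (anchoredBox t)| ≤ 2 * (N / 2 ^ K) := by
  classical
  set 𝒜 : Set (Set (ι → Set.Ico (0 : ℝ) 1)) := anchoredBox '' Set.Icc 0 1
  have hN_real : 512 * (6 * Fintype.card ι) * 4 ^ K ≤ (N : ℝ) := by
    rw [← mul_assoc]; norm_num; exact mod_cast hN
  choose Γ bracketing card_le using fun k : ℕ => exists_isBracketing_anchoredBox ι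
    (δ := (1 / 2) ^ (k + 1)) ⟨by positivity, pow_le_one₀ (by norm_num) (by norm_num)⟩
  have trivial_bracketing : IsBracketing volume 𝒜 {∅, Set.univ} 1 := isBracketing_pair_empty_univ
    ⟨0, ⟨le_rfl, zero_le_one⟩, anchoredBox_zero⟩ ⟨1, ⟨zero_le_one, le_rfl⟩, anchoredBox_one⟩
  obtain ⟨x, hx⟩ := exists_forall_abs_countDev_le (μ := volume) (𝒜 := 𝒜)
    (N := N) (Γ := fun k => k.casesOn {∅, Set.univ} Γ) (K := K) (h := 6 * Fintype.card ι)
    hN_real (Set.forall_mem_image.2 fun t _ => measurableSet_anchoredBox t)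
    (fun k => by
      cases k with
      | zero => simpa using trivial_bracketing
      | succ k => exact bracketing k)
    (fun A hA => by simpa using hA)
    (fun k => (mul_le_mul_of_nonneg_left (card_le k) (by positivity)).trans
      (two_pow_mul_bracketing_card_le_exp Fintype.card_ne_zero k))
  exact ⟨x, fun t ht => hx _ (Set.mem_image_of_mem _ ht)⟩

lemma localDisc_coe_eq_countDev_div {N s : ℕ} [NeZero N] (x : Fin N → Fin s → Set.Ico (0 : ℝ) 1)
    {t : Fin s → ℝ} (ht : t ∈ Set.Icc 0 1) :
    localDisc (fun n j => (x n j : ℝ)) t = countDev volume x (anchoredBox t) / N := by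
  classical
  have count_eq : ∑ n, (anchoredBox t).indicator (1 : (Fin s → Set.Ico (0 : ℝ) 1) → ℝ) (x n) =
      #{n | ∀ j, (x n j : ℝ) < t j} := by
    simp only [Set.indicator_apply, mem_anchoredBox, Pi.one_apply, sum_boole]
  rw [localDisc, countDev, sum_sub_distrib, count_eq, sum_const, card_univ, Fintype.card_fin,
    nsmul_eq_mul, sub_div, mul_div_cancel_left₀ _ (NeZero.ne (N : ℝ)), volume_real_anchoredBox ht]

theorem exists_forall_abs_localDisc_le {N s K : ℕ} (hs : 1 ≤ s) (hN : 3072 * s * 4 ^ K ≤ N) :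
    ∃ x : Fin N → Fin s → ℝ, (∀ n j, x n j ∈ Set.Ico (0 : ℝ) 1) ∧
      ∀ t ∈ Set.Icc (0 : Fin s → ℝ) 1, |localDisc x t| ≤ 2 * (1 / 2) ^ K := by
  have : NeZero s := ⟨by omega⟩
  have hN_pos : 0 < N := lt_of_lt_of_le (by positivity) hN
  have : NeZero N := ⟨hN_pos.ne'⟩
  obtain ⟨x, hx⟩ := exists_forall_abs_countDev_anchoredBox_le (Fin s) (N := N) (K := K)
    (by rwa [Fintype.card_fin])
  refine ⟨fun n j => x n j, fun n j => (x n j).2, fun t ht => ?_⟩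
  rw [localDisc_coe_eq_countDev_div x ht, abs_div, Nat.abs_cast, div_le_iff₀ (mod_cast hN_pos)]
  calc |countDev volume x (anchoredBox t)| ≤ 2 * (N / 2 ^ K) := hx t ht
    _ = 2 * (1 / 2) ^ K * N := by rw [one_div, inv_pow]; ring

end Boxes

section StarDiscrepancy

lemma starDisc_nonneg {N s : ℕ} (x : Fin N → Fin s → ℝ) : 0 ≤ starDisc x :=
  Real.sSup_nonneg (by rintro _ ⟨t, -, rfl⟩; exact abs_nonneg _)

lemma starDisc_le {N s : ℕ} {x : Fin N → Fin s → ℝ} {ε : ℝ} (hε : 0 ≤ ε)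
    (h : ∀ t ∈ Set.Icc (0 : Fin s → ℝ) 1, |localDisc x t| ≤ ε) : starDisc x ≤ ε :=
  Real.sSup_le (by rintro _ ⟨t, ht, rfl⟩; exact h t ⟨fun j => (ht j).1, fun j => (ht j).2⟩) hε

lemma minDisc_le_starDisc {N s : ℕ} {x : Fin N → Fin s → ℝ}
    (hx : ∀ n j, x n j ∈ Set.Ico (0 : ℝ) 1) : minDisc N s ≤ starDisc x :=
  csInf_le ⟨0, by rintro _ ⟨y, -, rfl⟩; exact starDisc_nonneg y⟩ ⟨x, hx, rfl⟩

end StarDiscrepancy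

lemma exists_nat_two_mul_half_pow_le {ε : ℝ} (hε : ε ∈ Set.Ioc 0 1) :
    ∃ K : ℕ, 2 * (1 / 2) ^ K ≤ ε ∧ 2 ^ K ≤ 4 * ε⁻¹ := by
  obtain ⟨n, lt_ε, ε_le⟩ := exists_nat_pow_near_of_lt_one hε.1 hε.2 one_half_pos one_half_lt_one
  refine ⟨n + 2, ?_, ?_⟩
  · linarith [show 2 * (1 / 2 : ℝ) ^ (n + 2) = (1 / 2) ^ (n + 1) by ring]
  · have two_pow_le : (2 : ℝ) ^ n ≤ ε⁻¹ := by
      rw [one_div, inv_pow] at ε_le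
      exact le_inv_of_le_inv₀ hε.1 ε_le
    linarith [pow_add (2 : ℝ) n 2]

/-- `N(s,ε) ≤ C s ε⁻²` for an absolute constant `C > 0`. -/
theorem invDisc_le :
    ∃ C : ℝ, 0 < C ∧ ∀ s : ℕ, 1 ≤ s → ∀ ε : ℝ, ε ∈ Set.Ioc (0:ℝ) 1 →
      (invDisc s ε : ℝ) ≤ C * s * ε⁻¹ ^ 2 := by
  refine ⟨3072 * 4 ^ 2, by norm_num, fun s hs ε hε => ?_⟩
  obtain ⟨K, hKε, hK⟩ := exists_nat_two_mul_half_pow_le hε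
  obtain ⟨x, hx, hdisc⟩ := exists_forall_abs_localDisc_le (K := K) hs le_rfl
  have hmin : minDisc (3072 * s * 4 ^ K) s ≤ ε := calc
    _ ≤ starDisc x := minDisc_le_starDisc hx
    _ ≤ ε := starDisc_le hε.1.le fun t ht => (hdisc t ht).trans hKε
  calc (invDisc s ε : ℝ) ≤ (3072 * s * 4 ^ K : ℕ) :=
        mod_cast Nat.sInf_le ⟨Nat.one_le_iff_ne_zero.2 (by positivity), hmin⟩
    _ = 3072 * s * (2 ^ K) ^ 2 := by push_cast; rw [← pow_mul, mul_comm K, pow_mul]; norm_num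
    _ ≤ 3072 * s * (4 * ε⁻¹) ^ 2 := by gcongr
    _ = 3072 * 4 ^ 2 * s * ε⁻¹ ^ 2 := by ring
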